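/- Under the standing assumptions on the delayed system, for every η > 0 there exists exactly one continuous function x : [t₀−g, T] → ℝⁿ with x(s) = ν(s) for s ∈ [t₀−g, t₀] and x(t) = ν(t₀) + (1/Γ(β)) ∫_{t₀}^t (t−s)^{β−1} [A₀ x(s) + A₁ x(s−g(s)) + A₂ d(s) + f(s, x(s), x(s−g(s)), d(s))] ds for all t ∈ [t₀, T]; moreover, with y₀ defined by y₀ = ν on [t₀−g,t₀] and y₀ ≡ ν(t₀) on [t₀,T], this solution satisfies ϖ(x, y₀) ≤ ((a₀+a₁+η)/η) · M [ (a₀+a₁)‖ν‖ + a₂ ρ ] / Γ(β+1), where M = sup_{s∈[t₀,T]} ( (s−t₀)^β / E_β((a₀+a₁+η)(s−t₀)^β) ) and ϖ is the weighted generalized metric with weight h(s) = 1 on [t₀−g,t₀], h(s) = E_β((a₀+a₁+η)(s−t₀)^β) on [t₀,T]. -/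

import Mathlib

open Set ENNReal MeasureTheory intervalIntegral

/-- Euclidean `ℝⁿ`. -/
abbrev Euc (n : ℕ) := EuclideanSpace ℝ (Fin n)

/-- The Mittag-Leffler function `E_β(t) = Σ_{b ≥ 0} t^b / Γ(bβ + 1)`. -/
noncomputable def mittagLeffler (β t : ℝ) : ℝ :=
  ∑' b : ℕ, t ^ b / Real.Gamma (b * β + 1)

/-- The weight function: `h(s) = 1` for `s ≤ t₀` and `h(s) = E_β(θ (s − t₀)^β)` for `s ≥ t₀`. -/
noncomputable def weight (β t₀ θ : ℝ) (s : ℝ) : ℝ :=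
  if s ≤ t₀ then 1 else mittagLeffler β (θ * (s - t₀) ^ β)

/-- The weighted generalized metric
`ϖ(x₁, x₂) = inf { b ∈ [0, ∞] : ‖x₁(t) − x₂(t)‖ ≤ b h(t) for all t ∈ [t₀ − g, T] }`. -/
noncomputable def genDist {n : ℕ} (β t₀ T g θ : ℝ) (x₁ x₂ : ℝ → Euc n) : ℝ≥0∞ :=
  sInf {b : ℝ≥0∞ | ∀ t ∈ Icc (t₀ - g) T,
    (‖x₁ t - x₂ t‖₊ : ℝ≥0∞) ≤ b * ENNReal.ofReal (weight β t₀ θ t)}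

/-- The integral operator `𝒱`:
`(𝒱 y)(t) = ν(t)` on `[t₀ − g, t₀]` and
`(𝒱 y)(t) = ν(t₀) + (1/Γ(β)) ∫_{t₀}^t (t−s)^{β−1} [A₀ y(s) + A₁ y(s−g(s)) + A₂ d(s)
  + f(s, y(s), y(s−g(s)), d(s))] ds` on `[t₀, T]`. -/
noncomputable def Vop {n p : ℕ} (β t₀ : ℝ)
    (A₀ A₁ : Euc n →L[ℝ] Euc n) (A₂ : Euc p →L[ℝ] Euc n)
    (f : ℝ → Euc n → Euc n → Euc p → Euc n) (d : ℝ → Euc p) (gdel : ℝ → ℝ)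
    (ν : ℝ → Euc n) (y : ℝ → Euc n) : ℝ → Euc n :=
  fun t =>
    if t ≤ t₀ then ν t
    else ν t₀ + (Real.Gamma β)⁻¹ •
      ∫ s in t₀..t, ((t - s) ^ (β - 1)) •
        (A₀ (y s) + A₁ (y (s - gdel s)) + A₂ (d s) + f s (y s) (y (s - gdel s)) (d s))

/-!
The Mittag-Leffler function `w t = E_β(θ (t - t₀)^β)` satisfies `θ I^β w = w - 1`, where `I^β` is
the Riemann–Liouville integral: apply `I^β` to the series term by term. Hence a right-hand side
that is Lipschitz with constant `L` for the distance weighted by `w` yields a Volterra operator that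
is a contraction with constant `L / θ`, however long the time interval. The delay does not spoil the
Lipschitz constant because `w` is increasing. For `L = a₀ + a₁` and `θ = a₀ + a₁ + η`, Banach's
fixed point theorem gives existence and uniqueness, and its a priori estimate, started at `y₀`,
gives the bound with the factor `1 / (1 - L / θ) = (a₀ + a₁ + η) / η`.
-/

section WeightedContraction

variable {X E : Type*} [TopologicalSpace X] [NormedAddCommGroup E] [NormedSpace ℝ E]

/-- The function `h⁻¹ • y`, whose supremum norm is the supremum of `‖y‖` relative to the weight
`h`. -/
noncomputable def weightedRescale (h : C(X, ℝ)) (hpos : ∀ t, 0 < h t) (y : C(X, E)) : C(X, E) :=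
  ⟨fun t => (h t)⁻¹ • y t, (h.continuous.inv₀ fun t => (hpos t).ne').smul y.continuous⟩

theorem weightedRescale_smul {h : C(X, ℝ)} (hpos : ∀ t, 0 < h t) (y : C(X, E)) :
    weightedRescale h hpos (h • y) = y :=
  ContinuousMap.ext fun t => inv_smul_smul₀ (hpos t).ne' (y t)

theorem smul_weightedRescale {h : C(X, ℝ)} (hpos : ∀ t, 0 < h t) (y : C(X, E)) :
    h • weightedRescale h hpos y = y :=
  ContinuousMap.ext fun t => smul_inv_smul₀ (hpos t).ne' (y t)

theorem dist_weightedRescale_le_iff [CompactSpace X] {h : C(X, ℝ)}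
    (hpos : ∀ t, 0 < h t) {y₁ y₂ : C(X, E)} {c : ℝ} (hc : 0 ≤ c) :
    dist (weightedRescale h hpos y₁) (weightedRescale h hpos y₂) ≤ c ↔
      ∀ t, ‖y₁ t - y₂ t‖ ≤ c * h t := by
  rw [ContinuousMap.dist_le hc]
  refine forall_congr' fun t => ?_
  simp only [weightedRescale, ContinuousMap.coe_mk, dist_eq_norm, ← smul_sub, norm_smul, norm_inv,
    Real.norm_of_nonneg (hpos t).le]
  rw [inv_mul_le_iff₀ (hpos t), mul_comm]

theorem exists_isFixedPt_of_weighted_contraction [CompactSpace X] [CompleteSpace E] {h : C(X, ℝ)}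
    (hpos : ∀ t, 0 < h t) {L : ℝ} (hL0 : 0 ≤ L) (hL1 : L < 1) {W : C(X, E) → C(X, E)}
    (hW : ∀ y₁ y₂ c, 0 ≤ c → (∀ t, ‖y₁ t - y₂ t‖ ≤ c * h t) →
      ∀ t, ‖W y₁ t - W y₂ t‖ ≤ L * c * h t) :
    ∃ x, Function.IsFixedPt W x ∧ ∀ y c, 0 ≤ c → (∀ t, ‖y t - W y t‖ ≤ c * h t) →
      ∀ t, ‖x t - y t‖ ≤ c / (1 - L) * h t := by
  -- Conjugating `W` by the rescaling turns the weighted distance into the usual one.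
  let Ψ (z : C(X, E)) : C(X, E) := weightedRescale h hpos (W (h • z))
  have hΨ : ContractingWith ⟨L, hL0⟩ Ψ := by
    refine ⟨by exact_mod_cast hL1, LipschitzWith.of_dist_le_mul fun z₁ z₂ => ?_⟩
    refine (dist_weightedRescale_le_iff hpos (by positivity)).2 (hW _ _ _ dist_nonneg ?_)
    rw [← dist_weightedRescale_le_iff hpos dist_nonneg, weightedRescale_smul,
      weightedRescale_smul]
  let z := hΨ.fixedPoint
  refine ⟨h • z, ?_, fun y c hc hy => ?_⟩
  · rw [Function.IsFixedPt, ← smul_weightedRescale hpos (W (h • z))]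
    exact congrArg (h • ·) hΨ.fixedPoint_isFixedPt
  · rw [← dist_weightedRescale_le_iff hpos (div_nonneg hc (sub_nonneg.2 hL1.le)),
      weightedRescale_smul, dist_comm]
    refine (hΨ.dist_fixedPoint_le _).trans (div_le_div_of_nonneg_right ?_ (sub_nonneg.2 hL1.le))
    simpa only [Ψ, smul_weightedRescale] using (dist_weightedRescale_le_iff hpos hc).2 hy

theorem exists_eqOn_Icc_of_weighted_contraction [CompleteSpace E] {a b L : ℝ} (hab : a ≤ b)
    (hL0 : 0 ≤ L) (hL1 : L < 1) {h : ℝ → ℝ} (hh : ContinuousOn h (Icc a b))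
    (hpos : ∀ t ∈ Icc a b, 0 < h t) {W : (ℝ → E) → ℝ → E}
    (hW : ∀ y, ContinuousOn y (Icc a b) → ContinuousOn (W y) (Icc a b))
    (hWL : ∀ y₁ y₂, ContinuousOn y₁ (Icc a b) → ContinuousOn y₂ (Icc a b) → ∀ c, 0 ≤ c →
      (∀ t ∈ Icc a b, ‖y₁ t - y₂ t‖ ≤ c * h t) →
      ∀ t ∈ Icc a b, ‖W y₁ t - W y₂ t‖ ≤ L * c * h t) :
    ∃ x, ContinuousOn x (Icc a b) ∧ EqOn x (W x) (Icc a b) ∧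
      ∀ y, ContinuousOn y (Icc a b) → ∀ c, 0 ≤ c →
        (∀ t ∈ Icc a b, ‖y t - W y t‖ ≤ c * h t) →
        ∀ t ∈ Icc a b, ‖x t - y t‖ ≤ c / (1 - L) * h t := by
  let restr (y : ℝ → E) (hy : ContinuousOn y (Icc a b)) : C(Icc a b, E) :=
    ⟨(Icc a b).domRestrict y, continuousOn_iff_continuous_domRestrict.1 hy⟩
  have hext (z : C(Icc a b, E)) : ContinuousOn (IccExtend hab z) (Icc a b) :=
    z.continuous.Icc_extend'.continuousOn
  have ext_restr (y hy) (t) (ht : t ∈ Icc a b) : IccExtend hab (restr y hy) t = y t :=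
    IccExtend_of_mem hab _ ht
  have W_congr {y₁ y₂} (hy₁ : ContinuousOn y₁ (Icc a b)) (hy₂ : ContinuousOn y₂ (Icc a b))
      (hy : EqOn y₁ y₂ (Icc a b)) : EqOn (W y₁) (W y₂) (Icc a b) := fun t ht => by
    have := hWL y₁ y₂ hy₁ hy₂ 0 le_rfl (fun s hs => by simp [hy hs]) t ht
    rwa [mul_zero, zero_mul, norm_le_zero_iff, sub_eq_zero] at this
  obtain ⟨x, hx_fix, hx_est⟩ := exists_isFixedPt_of_weighted_contraction
    (h := ⟨_, continuousOn_iff_continuous_domRestrict.1 hh⟩) (fun t => hpos t t.2) hL0 hL1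
    (W := fun z => restr (W (IccExtend hab z)) (hW _ (hext z)))
    (fun z₁ z₂ c hc hz t => hWL _ _ (hext z₁) (hext z₂) c hc
      (fun s hs => by simpa [IccExtend_of_mem hab _ hs] using hz ⟨s, hs⟩) t t.2)
  refine ⟨IccExtend hab x, hext x, fun t ht => ?_, fun y hy c hc hyc t ht => ?_⟩
  · rw [IccExtend_of_mem hab _ ht]
    exact (DFunLike.congr_fun hx_fix ⟨t, ht⟩).symm
  · rw [IccExtend_of_mem hab _ ht]
    refine hx_est (restr y hy) c hc (fun s => ?_) ⟨t, ht⟩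
    have hWs := W_congr (hext (restr y hy)) hy (ext_restr y hy) s.2
    exact (congrArg (‖y s - ·‖) hWs).trans_le (hyc s s.2)

end WeightedContraction

section MittagLeffler

variable {β : ℝ}

theorem rpow_mul_Gamma_add_one_le {x : ℝ} (hx : 0 < x) (hβ : 0 < β) :
    x ^ β * Real.Gamma (x + 1) ≤ Real.Gamma (x + 1 + β) := by
  have hΓ₀ := Real.Gamma_pos_of_pos hx
  have hΓ₁ : 0 < Real.Gamma (x + 1) := Real.Gamma_pos_of_pos (by positivity)
  have hΓ₂ : 0 < Real.Gamma (x + 1 + β) := Real.Gamma_pos_of_pos (by positivity)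
  -- Compare the slopes of the convex function `log ∘ Γ` on `[x, x + 1]` and `[x + 1, x + 1 + β]`.
  have hslope := Real.convexOn_log_Gamma.slope_mono_adjacent (mem_Ioi.2 hx)
    (mem_Ioi.2 (by positivity : 0 < x + 1 + β)) (lt_add_one x) (lt_add_of_pos_right (x + 1) hβ)
  have hlog : Real.log (Real.Gamma (x + 1)) - Real.log (Real.Gamma x) = Real.log x := by
    rw [Real.Gamma_add_one hx.ne', Real.log_mul hx.ne' hΓ₀.ne', add_sub_cancel_right]
  simp only [Function.comp_apply] at hslope
  rw [add_sub_cancel_left, add_sub_cancel_left, div_one, le_div_iff₀ hβ, hlog] at hslope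
  rw [← Real.log_le_log_iff (by positivity) hΓ₂, Real.log_mul (by positivity) hΓ₁.ne',
    Real.log_rpow hx]
  linarith

theorem Gamma_natCast_mul_add_one_pos (hβ : 0 ≤ β) (b : ℕ) : 0 < Real.Gamma (b * β + 1) :=
  Real.Gamma_pos_of_pos (by positivity)

open Filter in
theorem summable_mittagLeffler (hβ : 0 < β) (t : ℝ) :
    Summable fun b : ℕ => t ^ b / Real.Gamma (b * β + 1) := by
  have hlim : Tendsto (fun b : ℕ => ((b : ℝ) * β) ^ β) atTop atTop :=
    (tendsto_rpow_atTop hβ).comp (tendsto_natCast_atTop_atTop.atTop_mul_const hβ)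
  refine summable_of_ratio_norm_eventually_le (r := 1 / 2) (by norm_num) ?_
  filter_upwards [hlim.eventually_ge_atTop (2 * |t|), eventually_gt_atTop 0] with b ht hb
  have hΓ := Gamma_natCast_mul_add_one_pos hβ.le b
  have hΓ' := Gamma_natCast_mul_add_one_pos hβ.le (b + 1)
  have hgrowth : 2 * |t| * Real.Gamma (b * β + 1) ≤ Real.Gamma ((b + 1 : ℕ) * β + 1) := by
    refine (mul_le_mul_of_nonneg_right ht hΓ.le).trans ?_
    rw [show ((b + 1 : ℕ) : ℝ) * β + 1 = b * β + 1 + β by push_cast; ring]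
    exact rpow_mul_Gamma_add_one_le (by positivity) hβ
  rw [norm_div, norm_div, norm_pow, norm_pow, Real.norm_of_nonneg hΓ.le,
    Real.norm_of_nonneg hΓ'.le, Real.norm_eq_abs, div_mul_div_comm, one_mul,
    div_le_div_iff₀ hΓ' (by positivity)]
  calc |t| ^ (b + 1) * (2 * Real.Gamma (b * β + 1))
      = |t| ^ b * (2 * |t| * Real.Gamma (b * β + 1)) := by ring
    _ ≤ |t| ^ b * Real.Gamma ((b + 1 : ℕ) * β + 1) := by gcongr

theorem hasSum_mittagLeffler (hβ : 0 < β) (t : ℝ) :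
    HasSum (fun b : ℕ => t ^ b / Real.Gamma (b * β + 1)) (mittagLeffler β t) :=
  (summable_mittagLeffler hβ t).hasSum

theorem mittagLeffler_zero (β : ℝ) : mittagLeffler β 0 = 1 := by
  rw [mittagLeffler, tsum_eq_single 0 fun b hb => by simp [hb]]
  simp

theorem monotoneOn_mittagLeffler (hβ : 0 < β) : MonotoneOn (mittagLeffler β) (Ici 0) :=
  fun s hs t _ hst => (summable_mittagLeffler hβ s).tsum_le_tsum
    (fun b => div_le_div_of_nonneg_right (pow_le_pow_left₀ hs hst b)
      (Gamma_natCast_mul_add_one_pos hβ.le b).le) (summable_mittagLeffler hβ t)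

theorem norm_pow_div_Gamma_le (hβ : 0 ≤ β) {x r : ℝ} (hx : ‖x‖ ≤ r) (b : ℕ) :
    ‖x ^ b / Real.Gamma (b * β + 1)‖ ≤ r ^ b / Real.Gamma (b * β + 1) := by
  have hΓ := Gamma_natCast_mul_add_one_pos hβ b
  rw [norm_div, norm_pow, Real.norm_of_nonneg hΓ.le]
  gcongr

theorem continuous_mittagLeffler (hβ : 0 < β) : Continuous (mittagLeffler β) := by
  refine continuous_iff_continuousAt.2 fun t => ?_
  have hball : ContinuousOn (mittagLeffler β) (Metric.closedBall 0 (|t| + 1)) :=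
    continuousOn_tsum (fun b => by fun_prop) (summable_mittagLeffler hβ (|t| + 1))
      fun b x hx => norm_pow_div_Gamma_le hβ.le (mem_closedBall_zero_iff.1 hx) b
  exact hball.continuousAt (Metric.closedBall_mem_nhds_of_mem (by simp))

end MittagLeffler

section RiemannLiouville

variable {E : Type*} [NormedAddCommGroup E] [NormedSpace ℝ E] {β a t T : ℝ} {F G : ℝ → E}

/-- The Riemann–Liouville fractional integral of order `β` with base point `a`. -/
noncomputable def riemannLiouville (β a : ℝ) (F : ℝ → E) (t : ℝ) : E :=
  (Real.Gamma β)⁻¹ • ∫ s in a..t, (t - s) ^ (β - 1) • F s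

theorem intervalIntegrable_sub_rpow (hβ : 0 < β) (a t : ℝ) :
    IntervalIntegrable (fun s => (t - s) ^ (β - 1)) volume a t := by
  simpa using (intervalIntegrable_rpow' (a := t - a) (b := t - t)
    (show -1 < β - 1 by linarith)).comp_sub_left t

theorem intervalIntegrable_sub_rpow_smul (hβ : 0 < β) (hat : a ≤ t)
    (hF : ContinuousOn F (Icc a t)) :
    IntervalIntegrable (fun s => (t - s) ^ (β - 1) • F s) volume a t :=
  (intervalIntegrable_sub_rpow hβ a t).smul_continuousOn ((uIcc_of_le hat).symm ▸ hF)

theorem riemannLiouville_self (β a : ℝ) (F : ℝ → E) : riemannLiouville β a F a = 0 := by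
  simp [riemannLiouville]

theorem riemannLiouville_congr (hat : a ≤ t) (hFG : EqOn F G (Icc a t)) :
    riemannLiouville β a F t = riemannLiouville β a G t := by
  refine congrArg _ (integral_congr fun s hs => ?_)
  rw [uIcc_of_le hat] at hs
  exact congrArg _ (hFG hs)

theorem riemannLiouville_sub (hβ : 0 < β) (hat : a ≤ t) (hF : ContinuousOn F (Icc a t))
    (hG : ContinuousOn G (Icc a t)) :
    riemannLiouville β a (fun s => F s - G s) t =
      riemannLiouville β a F t - riemannLiouville β a G t := by
  simp only [riemannLiouville, smul_sub]
  rw [intervalIntegral.integral_sub (intervalIntegrable_sub_rpow_smul hβ hat hF)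
    (intervalIntegrable_sub_rpow_smul hβ hat hG), smul_sub]

theorem riemannLiouville_const_smul (β a c : ℝ) (F : ℝ → E) (t : ℝ) :
    riemannLiouville β a (fun s => c • F s) t = c • riemannLiouville β a F t := by
  simp only [riemannLiouville, smul_comm _ c, intervalIntegral.integral_smul]

theorem riemannLiouville_const (hβ : 0 < β) (a c t : ℝ) :
    riemannLiouville β a (fun _ => c) t = (t - a) ^ β / Real.Gamma (β + 1) * c := by
  have hkernel : ∫ s in a..t, (t - s) ^ (β - 1) = (t - a) ^ β / β := by
    rw [intervalIntegral.integral_comp_sub_left (fun x => x ^ (β - 1)) t, sub_self,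
      integral_rpow (Or.inl (by linarith)), sub_add_cancel, Real.zero_rpow hβ.ne', sub_zero]
  simp only [riemannLiouville, smul_eq_mul]
  rw [intervalIntegral.integral_mul_const, hkernel, Real.Gamma_add_one hβ.ne']
  ring

theorem norm_riemannLiouville_le (hβ : 0 < β) (hat : a ≤ t) {φ : ℝ → ℝ}
    (hφ : ContinuousOn φ (Icc a t)) (hF : ∀ s ∈ Icc a t, ‖F s‖ ≤ φ s) :
    ‖riemannLiouville β a F t‖ ≤ riemannLiouville β a φ t := by
  rw [riemannLiouville, norm_smul, norm_inv,
    Real.norm_of_nonneg (Real.Gamma_pos_of_pos hβ).le, riemannLiouville, smul_eq_mul]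
  refine mul_le_mul_of_nonneg_left ?_ (inv_nonneg.2 (Real.Gamma_pos_of_pos hβ).le)
  refine intervalIntegral.norm_integral_le_of_norm_le hat (.of_forall fun s hs => ?_)
    (intervalIntegrable_sub_rpow_smul hβ hat hφ)
  have hk := Real.rpow_nonneg (sub_nonneg.2 hs.2) (β - 1)
  rw [norm_smul, Real.norm_of_nonneg hk]
  exact mul_le_mul_of_nonneg_left (hF s (Ioc_subset_Icc_self hs)) hk

theorem riemannLiouville_eq_rpow_smul (hβ : 0 < β) (hat : a ≤ t) (F : ℝ → E) :
    riemannLiouville β a F t =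
      (t - a) ^ β • riemannLiouville β 0 (fun u => F (a + (t - a) * u)) 1 := by
  rcases hat.eq_or_lt with rfl | hat
  · rw [riemannLiouville_self, sub_self, Real.zero_rpow hβ.ne', zero_smul]
  have hc : 0 < t - a := sub_pos.2 hat
  have hsubst := intervalIntegral.smul_integral_comp_add_mul (a := 0) (b := 1)
    (fun s => (t - s) ^ (β - 1) • F s) (t - a) a
  rw [mul_zero, mul_one, add_zero, add_sub_cancel] at hsubst
  rw [riemannLiouville, riemannLiouville, smul_comm, ← hsubst]
  congr 1
  rw [← sub_add_cancel β 1, Real.rpow_add_one hc.ne', mul_comm, mul_smul, sub_add_cancel,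
    ← intervalIntegral.integral_smul ((t - a) ^ (β - 1))]
  congr 1
  refine integral_congr fun u hu => ?_
  rw [uIcc_of_le zero_le_one] at hu
  rw [show t - (a + (t - a) * u) = (t - a) * (1 - u) by ring,
    Real.mul_rpow hc.le (sub_nonneg.2 hu.2), mul_smul]

theorem continuousOn_riemannLiouville (hβ : 0 < β) (hF : ContinuousOn F (Icc a T)) :
    ContinuousOn (riemannLiouville β a F) (Icc a T) := by
  have hmem {t u : ℝ} (ht : t ∈ Icc a T) (hu : u ∈ Icc (0 : ℝ) 1) :
      a + (t - a) * u ∈ Icc a T := by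
    constructor <;> nlinarith [ht.1, ht.2, hu.1, hu.2]
  obtain ⟨C, hC⟩ := isCompact_Icc.exists_bound_of_continuousOn hF
  -- After rescaling, the singular kernel no longer depends on `t`.
  refine ContinuousOn.congr (.smul (.rpow_const (by fun_prop) fun _ _ => Or.inr hβ.le)
    (continuousOn_const.smul fun t ht => ?_)) fun t ht => riemannLiouville_eq_rpow_smul hβ ht.1 F
  have mem_of_uIoc {u : ℝ} (hu : u ∈ uIoc (0 : ℝ) 1) : u ∈ Icc (0 : ℝ) 1 :=
    Ioc_subset_Icc_self (uIoc_of_le (zero_le_one' ℝ) ▸ hu)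
  refine intervalIntegral.continuousWithinAt_of_dominated_interval
    (bound := fun u => ‖(1 - u) ^ (β - 1)‖ * C) ?_ ?_
    ((intervalIntegrable_sub_rpow hβ 0 1).norm.mul_const C) (.of_forall fun u hu => ?_)
  · filter_upwards [self_mem_nhdsWithin] with t ht
    refine (intervalIntegrable_sub_rpow_smul hβ zero_le_one ?_).def'.aestronglyMeasurable
    exact hF.comp (by fun_prop) fun u hu => hmem ht hu
  · filter_upwards [self_mem_nhdsWithin] with t ht
    refine .of_forall fun u hu => ?_
    rw [norm_smul]
    exact mul_le_mul_of_nonneg_left (hC _ (hmem ht (mem_of_uIoc hu))) (norm_nonneg _)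
  · exact (continuousOn_const.smul
      (hF.comp (by fun_prop) fun t ht => hmem ht (mem_of_uIoc hu))) t ht

theorem riemannLiouville_zero_rpow_one {α : ℝ} (hα : -1 < α) (hβ : 0 < β) :
    riemannLiouville β 0 (fun u => u ^ α) 1 =
      Real.Gamma (α + 1) / Real.Gamma (α + 1 + β) := by
  have hbeta := ProbabilityTheory.beta_eq_betaIntegralReal (α + 1) β (by linarith) hβ
  have hreal : Complex.betaIntegral (α + 1 : ℝ) β =
      ∫ u in (0 : ℝ)..1, (((1 - u) ^ (β - 1) • u ^ α : ℝ) : ℂ) := by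
    refine integral_congr fun u hu => ?_
    rw [uIcc_of_le zero_le_one] at hu
    rw [smul_eq_mul, Complex.ofReal_mul, Complex.ofReal_cpow (sub_nonneg.2 hu.2),
      Complex.ofReal_cpow hu.1]
    push_cast
    rw [add_sub_cancel_right, mul_comm]
  rw [hreal, intervalIntegral.integral_ofReal, Complex.ofReal_re, ProbabilityTheory.beta] at hbeta
  rw [riemannLiouville, ← hbeta, smul_eq_mul]
  have := (Real.Gamma_pos_of_pos hβ).ne'
  field_simp

theorem riemannLiouville_sub_rpow {α : ℝ} (hα : -1 < α) (hβ : 0 < β) (hat : a ≤ t) :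
    riemannLiouville β a (fun s => (s - a) ^ α) t =
      (t - a) ^ β * (t - a) ^ α * (Real.Gamma (α + 1) / Real.Gamma (α + 1 + β)) := by
  rw [riemannLiouville_eq_rpow_smul hβ hat, ← riemannLiouville_zero_rpow_one hα hβ,
    smul_eq_mul, mul_assoc, ← smul_eq_mul ((t - a) ^ α), ← riemannLiouville_const_smul]
  refine congrArg _ (riemannLiouville_congr zero_le_one fun u hu => ?_)
  rw [add_sub_cancel_left, Real.mul_rpow (sub_nonneg.2 hat) hu.1, smul_eq_mul]

theorem hasSum_riemannLiouville (hβ : 0 < β) (hat : a ≤ t) {F : ℕ → ℝ → E} {u : ℕ → ℝ}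
    (hF : ∀ b, ContinuousOn (F b) (Icc a t)) (hu : Summable u)
    (hFu : ∀ b, ∀ s ∈ Icc a t, ‖F b s‖ ≤ u b) (hG : ∀ s ∈ Icc a t, HasSum (F · s) (G s)) :
    HasSum (fun b => riemannLiouville β a (F b) t) (riemannLiouville β a G t) := by
  have mem_of_uIoc {s : ℝ} (hs : s ∈ uIoc a t) : s ∈ Icc a t :=
    Ioc_subset_Icc_self (uIoc_of_le hat ▸ hs)
  refine (intervalIntegral.hasSum_integral_of_dominated_convergence
    (fun b s => ‖(t - s) ^ (β - 1)‖ * u b)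
    (fun b => (intervalIntegrable_sub_rpow_smul hβ hat (hF b)).def'.aestronglyMeasurable)
    (fun b => .of_forall fun s hs => ?_) (.of_forall fun s _ => hu.mul_left _) ?_
    (.of_forall fun s hs => (hG s (mem_of_uIoc hs)).const_smul _)).const_smul _
  · rw [norm_smul]
    exact mul_le_mul_of_nonneg_left (hFu b s (mem_of_uIoc hs)) (norm_nonneg _)
  · simp_rw [tsum_mul_left]
    exact (intervalIntegrable_sub_rpow hβ a t).norm.mul_const _

end RiemannLiouville

theorem mul_riemannLiouville_pow_div_Gamma {β a t : ℝ} (hβ : 0 < β) (hat : a ≤ t) (θ : ℝ)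
    (b : ℕ) :
    θ * riemannLiouville β a (fun s => (θ * (s - a) ^ β) ^ b / Real.Gamma (b * β + 1)) t =
      (θ * (t - a) ^ β) ^ (b + 1) / Real.Gamma ((b + 1 : ℕ) * β + 1) := by
  have hmonomial : EqOn (fun s => (θ * (s - a) ^ β) ^ b / Real.Gamma (b * β + 1))
      (fun s => (θ ^ b / Real.Gamma (b * β + 1)) • (s - a) ^ (b * β)) (Icc a t) := fun s hs => by
    simp only [smul_eq_mul]
    rw [mul_pow, ← Real.rpow_mul_natCast (sub_nonneg.2 hs.1), mul_comm β, mul_div_right_comm]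
  have hb : (-1 : ℝ) < b * β := neg_one_lt_zero.trans_le (by positivity)
  rw [riemannLiouville_congr hat hmonomial, riemannLiouville_const_smul,
    riemannLiouville_sub_rpow hb hβ hat, mul_comm (b : ℝ) β,
    Real.rpow_mul_natCast (sub_nonneg.2 hat), mul_comm β,
    show ((b + 1 : ℕ) : ℝ) * β + 1 = b * β + 1 + β by push_cast; ring]
  have := (Gamma_natCast_mul_add_one_pos hβ.le b).ne'
  rw [smul_eq_mul]
  field_simp
  ring

theorem mul_riemannLiouville_mittagLeffler {β a t : ℝ} (hβ : 0 < β) (hat : a ≤ t) (θ : ℝ) :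
    θ * riemannLiouville β a (fun s => mittagLeffler β (θ * (s - a) ^ β)) t =
      mittagLeffler β (θ * (t - a) ^ β) - 1 := by
  have hle (s) (hs : s ∈ Icc a t) : ‖θ * (s - a) ^ β‖ ≤ |θ| * (t - a) ^ β := by
    have hs0 : 0 ≤ s - a := sub_nonneg.2 hs.1
    rw [norm_mul, Real.norm_eq_abs, Real.norm_of_nonneg (Real.rpow_nonneg hs0 β)]
    gcongr
    exact hs.2
  have hseries := (hasSum_riemannLiouville hβ hat (u := fun b : ℕ =>
      (|θ| * (t - a) ^ β) ^ b / Real.Gamma (b * β + 1))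
    (fun b => ((continuousOn_const.mul (ContinuousOn.rpow_const (by fun_prop)
      fun _ _ => Or.inr hβ.le)).pow b).div_const _)
    (summable_mittagLeffler hβ _) (fun b s hs => norm_pow_div_Gamma_le hβ.le (hle s hs) b)
    fun s _ => hasSum_mittagLeffler hβ (θ * (s - a) ^ β)).mul_left θ
  have htail := (hasSum_nat_add_iff' 1).2 (hasSum_mittagLeffler hβ (θ * (t - a) ^ β))
  refine ((hseries.congr_fun fun b => ?_).unique htail).trans (by simp)
  exact (mul_riemannLiouville_pow_div_Gamma hβ hat θ b).symm

section Weight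

variable {β θ : ℝ}

theorem weight_eq_mittagLeffler_max (hβ : 0 < β) (t₀ θ s : ℝ) :
    weight β t₀ θ s = mittagLeffler β (θ * (max s t₀ - t₀) ^ β) := by
  rcases le_or_gt s t₀ with hs | hs
  · rw [weight, if_pos hs, max_eq_right hs, sub_self, Real.zero_rpow hβ.ne', mul_zero,
      mittagLeffler_zero]
  · rw [weight, if_neg hs.not_ge, max_eq_left hs.le]

theorem weight_of_ge {t₀ s : ℝ} (hβ : 0 < β) (θ : ℝ) (hs : t₀ ≤ s) :
    weight β t₀ θ s = mittagLeffler β (θ * (s - t₀) ^ β) := by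
  rw [weight_eq_mittagLeffler_max hβ, max_eq_left hs]

theorem weight_max (hβ : 0 < β) (t₀ θ s : ℝ) : weight β t₀ θ (max s t₀) = weight β t₀ θ s := by
  rw [weight_of_ge hβ θ (le_max_right s t₀), weight_eq_mittagLeffler_max hβ]

theorem continuous_weight (hβ : 0 < β) (t₀ θ : ℝ) : Continuous (weight β t₀ θ) := by
  rw [funext (weight_eq_mittagLeffler_max hβ t₀ θ)]
  exact (continuous_mittagLeffler hβ).comp
    (continuous_const.mul (.rpow_const (by fun_prop) fun _ => Or.inr hβ.le))

theorem monotone_weight (hβ : 0 < β) (t₀ : ℝ) (hθ : 0 ≤ θ) : Monotone (weight β t₀ θ) := by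
  intro s t hst
  have hs : 0 ≤ max s t₀ - t₀ := sub_nonneg.2 (le_max_right s t₀)
  have ht : 0 ≤ max t t₀ - t₀ := sub_nonneg.2 (le_max_right t t₀)
  rw [weight_eq_mittagLeffler_max hβ, weight_eq_mittagLeffler_max hβ]
  refine monotoneOn_mittagLeffler hβ (mem_Ici.2 (by positivity)) (mem_Ici.2 (by positivity)) ?_
  gcongr

theorem one_le_weight (hβ : 0 < β) (t₀ : ℝ) (hθ : 0 ≤ θ) (s : ℝ) : 1 ≤ weight β t₀ θ s := by
  calc 1 = weight β t₀ θ (min s t₀) := (if_pos (min_le_right s t₀)).symm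
    _ ≤ weight β t₀ θ s := monotone_weight hβ t₀ hθ (min_le_left s t₀)

theorem mul_riemannLiouville_weight {t₀ t : ℝ} (hβ : 0 < β) (θ : ℝ) (ht : t₀ ≤ t) :
    θ * riemannLiouville β t₀ (weight β t₀ θ) t = weight β t₀ θ t - 1 := by
  rw [riemannLiouville_congr ht fun s hs => weight_of_ge hβ θ hs.1,
    mul_riemannLiouville_mittagLeffler hβ ht, weight_of_ge hβ θ ht]

theorem rpow_le_sSup_mul_weight {t₀ T t : ℝ} (hβ : 0 < β) (hθ : 0 ≤ θ) (ht : t ∈ Icc t₀ T) :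
    (t - t₀) ^ β ≤ sSup ((fun s => (s - t₀) ^ β / mittagLeffler β (θ * (s - t₀) ^ β)) ''
      Icc t₀ T) * weight β t₀ θ t := by
  have hpos (s) : 0 < weight β t₀ θ s := zero_lt_one.trans_le (one_le_weight hβ t₀ hθ s)
  rw [image_congr fun s hs => by rw [← weight_of_ge hβ θ hs.1], ← div_le_iff₀ (hpos t)]
  refine le_csSup (isCompact_Icc.bddAbove_image (.div (.rpow_const (by fun_prop)
    fun _ _ => Or.inr hβ.le) (continuous_weight hβ t₀ θ).continuousOn fun s _ => (hpos s).ne')) ?_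
  exact mem_image_of_mem _ ht

end Weight

section WeightedEDist

variable {X E : Type*} [NormedAddCommGroup E]

/-- The generalized distance `inf {b | ‖x₁ - x₂‖ ≤ b h on S}` of functions with values in a normed
space; `genDist` is the case of the Mittag-Leffler weight on `[t₀ - g, T]`. -/
noncomputable def weightedEDist (S : Set X) (h : X → ℝ) (x₁ x₂ : X → E) : ℝ≥0∞ :=
  sInf {b : ℝ≥0∞ | ∀ t ∈ S, (‖x₁ t - x₂ t‖₊ : ℝ≥0∞) ≤ b * ENNReal.ofReal (h t)}

theorem weightedEDist_le_ofReal {S : Set X} {h : X → ℝ} {x₁ x₂ : X → E} {c : ℝ} (hc : 0 ≤ c)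
    (hx : ∀ t ∈ S, ‖x₁ t - x₂ t‖ ≤ c * h t) :
    weightedEDist S h x₁ x₂ ≤ ENNReal.ofReal c := by
  refine sInf_le fun t ht => ?_
  rw [← ENNReal.ofReal_mul hc, ← enorm_eq_nnnorm, ← ofReal_norm]
  exact ENNReal.ofReal_le_ofReal (hx t ht)

end WeightedEDist

section Clamp

variable {α : Type*} [LinearOrder α] {a b c t : α}

theorem min_mem_Icc (hab : a ≤ b) (hat : a ≤ t) : min t b ∈ Icc a b :=
  ⟨le_min hat hab, min_le_right t b⟩

theorem max_mem_Icc (hbc : b ≤ c) (htc : t ≤ c) : max t b ∈ Icc b c :=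
  ⟨le_max_right t b, max_le htc hbc⟩

theorem continuousOn_comp_min [TopologicalSpace α] [OrderClosedTopology α] {E : Type*}
    [TopologicalSpace E] {ν : α → E} (hab : a ≤ b) (hν : ContinuousOn ν (Icc a b)) :
    ContinuousOn (fun t => ν (min t b)) (Icc a c) :=
  hν.comp (by fun_prop) fun _ ht => min_mem_Icc hab ht.1

end Clamp

section FracVolterra

variable {E : Type*} [NormedAddCommGroup E] [NormedSpace ℝ E] {β a t₀ t T θ : ℝ}
  {ν F F₁ F₂ : ℝ → E}

/-- The Volterra operator with initial function `ν` and right-hand side `F`: it is `ν` up to time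
`t₀`, and `ν t₀` plus the fractional integral of `F` afterwards. Clamping the time with `min` and
`max` makes its continuity across `t₀` automatic. -/
noncomputable def fracVolterra (β t₀ : ℝ) (ν F : ℝ → E) (t : ℝ) : E :=
  ν (min t t₀) + riemannLiouville β t₀ F (max t t₀)

theorem fracVolterra_of_le (ht : t ≤ t₀) : fracVolterra β t₀ ν F t = ν t := by
  rw [fracVolterra, min_eq_left ht, max_eq_right ht, riemannLiouville_self, add_zero]

theorem fracVolterra_of_ge (ht : t₀ ≤ t) :
    fracVolterra β t₀ ν F t = ν t₀ + riemannLiouville β t₀ F t := by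
  rw [fracVolterra, min_eq_right ht, max_eq_left ht]

theorem eqOn_fracVolterra_iff {x : ℝ → E} (ha : a ≤ t₀) (hT : t₀ ≤ T) :
    EqOn x (fracVolterra β t₀ ν F) (Icc a T) ↔
      (∀ s ∈ Icc a t₀, x s = ν s) ∧
        ∀ t ∈ Icc t₀ T, x t = ν t₀ + riemannLiouville β t₀ F t := by
  rw [← Icc_union_Icc_eq_Icc ha hT, eqOn_union]
  exact and_congr (forall₂_congr fun s hs => by rw [fracVolterra_of_le hs.2])
    (forall₂_congr fun t ht => by rw [fracVolterra_of_ge ht.1])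

theorem continuousOn_fracVolterra (hβ : 0 < β) (ha : a ≤ t₀) (hT : t₀ ≤ T)
    (hν : ContinuousOn ν (Icc a t₀)) (hF : ContinuousOn F (Icc t₀ T)) :
    ContinuousOn (fracVolterra β t₀ ν F) (Icc a T) :=
  (continuousOn_comp_min ha hν).add ((continuousOn_riemannLiouville hβ hF).comp
    (g := riemannLiouville β t₀ F) (f := fun t => max t t₀) (by fun_prop)
    fun _ ht => max_mem_Icc hT ht.2)

theorem norm_fracVolterra_sub_le_mul_weight (hβ : 0 < β) (hθ : 0 < θ) (hT : t₀ ≤ T)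
    (hF₁ : ContinuousOn F₁ (Icc t₀ T)) (hF₂ : ContinuousOn F₂ (Icc t₀ T)) {c : ℝ} (hc : 0 ≤ c)
    (hF : ∀ s ∈ Icc t₀ T, ‖F₁ s - F₂ s‖ ≤ c * weight β t₀ θ s) (ht : t ≤ T) :
    ‖fracVolterra β t₀ ν F₁ t - fracVolterra β t₀ ν F₂ t‖ ≤ c / θ * weight β t₀ θ t := by
  have hmax := max_mem_Icc hT ht
  have hsub : Icc t₀ (max t t₀) ⊆ Icc t₀ T := Icc_subset_Icc_right hmax.2
  calc ‖fracVolterra β t₀ ν F₁ t - fracVolterra β t₀ ν F₂ t‖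
      = ‖riemannLiouville β t₀ (fun s => F₁ s - F₂ s) (max t t₀)‖ := by
        rw [fracVolterra, fracVolterra, add_sub_add_left_eq_sub,
          riemannLiouville_sub hβ hmax.1 (hF₁.mono hsub) (hF₂.mono hsub)]
    _ ≤ riemannLiouville β t₀ (fun s => c • weight β t₀ θ s) (max t t₀) :=
        norm_riemannLiouville_le hβ hmax.1
          ((continuous_weight hβ t₀ θ).const_smul c).continuousOn
          fun s hs => hF s (hsub hs)
    _ = c / θ * (weight β t₀ θ t - 1) := by
        rw [riemannLiouville_const_smul, ← weight_max hβ,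
          ← mul_riemannLiouville_weight hβ θ hmax.1, smul_eq_mul]
        field_simp
    _ ≤ c / θ * weight β t₀ θ t := by gcongr; linarith

theorem norm_comp_min_sub_fracVolterra_le (hβ : 0 < β) (hT : t₀ ≤ T) {B : ℝ}
    (hB : ∀ s ∈ Icc t₀ T, ‖F s‖ ≤ B) (ht : t ≤ T) :
    ‖ν (min t t₀) - fracVolterra β t₀ ν F t‖ ≤
      (max t t₀ - t₀) ^ β / Real.Gamma (β + 1) * B := by
  have hmax := max_mem_Icc hT ht
  rw [fracVolterra, sub_add_cancel_left, norm_neg, ← riemannLiouville_const hβ]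
  exact norm_riemannLiouville_le hβ hmax.1 continuousOn_const
    fun s hs => hB s (Icc_subset_Icc_right hmax.2 hs)

theorem exists_eqOn_fracVolterra [CompleteSpace E] {L : ℝ} (hβ : 0 < β) (ha : a ≤ t₀)
    (hT : t₀ ≤ T) (hL : 0 ≤ L) (hLθ : L < θ) (hν : ContinuousOn ν (Icc a t₀)) {R : (ℝ → E) → ℝ → E}
    (hR : ∀ y, ContinuousOn y (Icc a T) → ContinuousOn (R y) (Icc t₀ T))
    (hRL : ∀ y₁ y₂ c, 0 ≤ c → (∀ t ∈ Icc a T, ‖y₁ t - y₂ t‖ ≤ c * weight β t₀ θ t) →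
      ∀ s ∈ Icc t₀ T, ‖R y₁ s - R y₂ s‖ ≤ L * c * weight β t₀ θ s) :
    ∃ x, ContinuousOn x (Icc a T) ∧ EqOn x (fracVolterra β t₀ ν (R x)) (Icc a T) ∧
      ∀ y, ContinuousOn y (Icc a T) → ∀ c, 0 ≤ c →
        (∀ t ∈ Icc a T, ‖y t - fracVolterra β t₀ ν (R y) t‖ ≤ c * weight β t₀ θ t) →
        ∀ t ∈ Icc a T, ‖x t - y t‖ ≤ c / (1 - L / θ) * weight β t₀ θ t := by
  have hθ : 0 < θ := hL.trans_lt hLθ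
  refine exists_eqOn_Icc_of_weighted_contraction (ha.trans hT) (div_nonneg hL hθ.le)
    ((div_lt_one hθ).2 hLθ) (continuous_weight hβ t₀ θ).continuousOn
    (fun t _ => zero_lt_one.trans_le (one_le_weight hβ t₀ hθ.le t))
    (fun y hy => continuousOn_fracVolterra hβ ha hT hν (hR y hy))
    fun y₁ y₂ hy₁ hy₂ c hc hy t ht => ?_
  rw [div_mul_eq_mul_div]
  exact norm_fracVolterra_sub_le_mul_weight hβ hθ hT (hR y₁ hy₁) (hR y₂ hy₂) (by positivity)
    (hRL y₁ y₂ c hc hy) ht.2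

theorem exists_unique_eqOn_fracVolterra [CompleteSpace E] {L B : ℝ} (hβ : 0 < β) (ha : a ≤ t₀)
    (hT : t₀ ≤ T) (hL : 0 ≤ L) (hLθ : L < θ) (hν : ContinuousOn ν (Icc a t₀))
    {R : (ℝ → E) → ℝ → E} (hR : ∀ y, ContinuousOn y (Icc a T) → ContinuousOn (R y) (Icc t₀ T))
    (hRL : ∀ y₁ y₂ c, 0 ≤ c → (∀ t ∈ Icc a T, ‖y₁ t - y₂ t‖ ≤ c * weight β t₀ θ t) →
      ∀ s ∈ Icc t₀ T, ‖R y₁ s - R y₂ s‖ ≤ L * c * weight β t₀ θ s)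
    (hB : ∀ s ∈ Icc t₀ T, ‖R (fun t => ν (min t t₀)) s‖ ≤ B) :
    ∃ x, (ContinuousOn x (Icc a T) ∧ EqOn x (fracVolterra β t₀ ν (R x)) (Icc a T)) ∧
      weightedEDist (Icc a T) (weight β t₀ θ) x (fun t => ν (min t t₀)) ≤
        ENNReal.ofReal (θ / (θ - L) * (sSup ((fun s =>
          (s - t₀) ^ β / mittagLeffler β (θ * (s - t₀) ^ β)) '' Icc t₀ T) * B /
            Real.Gamma (β + 1))) ∧
      ∀ x', ContinuousOn x' (Icc a T) → EqOn x' (fracVolterra β t₀ ν (R x')) (Icc a T) →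
        EqOn x' x (Icc a T) := by
  obtain ⟨x, hx_cont, hx_eq, hx_est⟩ := exists_eqOn_fracVolterra hβ ha hT hL hLθ hν hR hRL
  have hθ : 0 < θ := hL.trans_lt hLθ
  have hB0 : 0 ≤ B := (norm_nonneg _).trans (hB t₀ (left_mem_Icc.2 hT))
  set M := sSup ((fun s => (s - t₀) ^ β / mittagLeffler β (θ * (s - t₀) ^ β)) '' Icc t₀ T)
  have hM (t) (ht : t ∈ Icc a T) : (max t t₀ - t₀) ^ β ≤ M * weight β t₀ θ t := by
    rw [← weight_max hβ]
    exact rpow_le_sSup_mul_weight hβ hθ.le (max_mem_Icc hT ht.2)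
  have hM0 : 0 ≤ M := Real.sSup_nonneg <| forall_mem_image.2 fun s hs => by
    rw [← weight_of_ge hβ θ hs.1]
    exact div_nonneg (Real.rpow_nonneg (sub_nonneg.2 hs.1) β)
      (zero_le_one.trans (one_le_weight hβ t₀ hθ.le s))
  refine ⟨x, ⟨hx_cont, hx_eq⟩, weightedEDist_le_ofReal ?_ fun t ht => ?_,
    fun x' hx' hx'_eq t ht => ?_⟩
  · have := sub_pos.2 hLθ
    positivity
  · rw [show θ / (θ - L) * (M * B / Real.Gamma (β + 1)) =
      M * B / Real.Gamma (β + 1) / (1 - L / θ) by rw [one_sub_div hθ.ne', div_div_eq_mul_div]; ring]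
    refine hx_est _ (continuousOn_comp_min ha hν) _ (by positivity) (fun s hs => ?_) t ht
    refine (norm_comp_min_sub_fracVolterra_le hβ hT hB hs.2).trans ?_
    calc (max s t₀ - t₀) ^ β / Real.Gamma (β + 1) * B
        ≤ M * weight β t₀ θ s / Real.Gamma (β + 1) * B := by gcongr; exact hM s hs
      _ = M * B / Real.Gamma (β + 1) * weight β t₀ θ s := by ring
  · have hzero := hx_est x' hx' 0 le_rfl (fun s hs => by simp [← hx'_eq hs]) t ht
    rw [zero_div, zero_mul, norm_le_zero_iff, sub_eq_zero] at hzero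
    exact hzero.symm

end FracVolterra

section DelayField

variable {D E : Type*} [NormedAddCommGroup D] [NormedSpace ℝ D] [NormedAddCommGroup E]
  [NormedSpace ℝ E] {A₀ A₁ : E →L[ℝ] E} {A₂ : D →L[ℝ] E} {f : ℝ → E → E → D → E} {d : ℝ → D}
  {τ κ : ℝ → ℝ} {a₀ a₁ a₂ t₀ T g s : ℝ} {y y₁ y₂ : ℝ → E}

/-- The right-hand side of the delayed system with delay `τ`, evaluated along the trajectory `y`. -/
def delayField (A₀ A₁ : E →L[ℝ] E) (A₂ : D →L[ℝ] E) (f : ℝ → E → E → D → E) (d : ℝ → D)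
    (τ : ℝ → ℝ) (y : ℝ → E) (s : ℝ) : E :=
  A₀ (y s) + A₁ (y (s - τ s)) + A₂ (d s) + f s (y s) (y (s - τ s)) (d s)

theorem sub_delay_mem_Icc (hτ : ∀ s ∈ Icc t₀ T, τ s ∈ Icc 0 g) (hs : s ∈ Icc t₀ T) :
    s - τ s ∈ Icc (t₀ - g) T :=
  ⟨sub_le_sub hs.1 (hτ s hs).2, (sub_le_self s (hτ s hs).1).trans hs.2⟩

theorem continuousOn_delayField (hg : 0 ≤ g) (hτ_cont : ContinuousOn τ (Icc t₀ T))
    (hτ : ∀ s ∈ Icc t₀ T, τ s ∈ Icc 0 g)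
    (hf : Continuous fun q : ℝ × E × E × D => f q.1 q.2.1 q.2.2.1 q.2.2.2) (hd : Continuous d)
    (hy : ContinuousOn y (Icc (t₀ - g) T)) :
    ContinuousOn (delayField A₀ A₁ A₂ f d τ y) (Icc t₀ T) := by
  have hy_now : ContinuousOn y (Icc t₀ T) :=
    hy.mono (Icc_subset_Icc_left (sub_le_self t₀ hg))
  have hy_delayed : ContinuousOn (fun s => y (s - τ s)) (Icc t₀ T) :=
    hy.comp (continuousOn_id.sub hτ_cont) fun s hs => sub_delay_mem_Icc hτ hs
  exact (((A₀.continuous.comp_continuousOn hy_now).add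
    (A₁.continuous.comp_continuousOn hy_delayed)).add (A₂.continuous.comp hd).continuousOn).add
    (hf.comp_continuousOn
      (continuousOn_id.prodMk (hy_now.prodMk (hy_delayed.prodMk hd.continuousOn))))

theorem norm_linear_add_sub_le {F : E → E → D → E} {k : ℝ}
    (hF : ∀ u₁ u₂ u₃ w₁ w₂ w₃,
      ‖F u₁ u₂ u₃ - F w₁ w₂ w₃‖ ≤ k * (‖u₁ - w₁‖ + ‖u₂ - w₂‖ + ‖u₃ - w₃‖))
    (h₀ : ‖A₀‖ + k ≤ a₀) (h₁ : ‖A₁‖ + k ≤ a₁) (h₂ : ‖A₂‖ + k ≤ a₂) (u₁ u₂ w₁ w₂ : E)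
    (u₃ w₃ : D) :
    ‖(A₀ u₁ + A₁ u₂ + A₂ u₃ + F u₁ u₂ u₃) - (A₀ w₁ + A₁ w₂ + A₂ w₃ + F w₁ w₂ w₃)‖ ≤
      a₀ * ‖u₁ - w₁‖ + a₁ * ‖u₂ - w₂‖ + a₂ * ‖u₃ - w₃‖ := by
  calc _ = ‖A₀ (u₁ - w₁) + A₁ (u₂ - w₂) + A₂ (u₃ - w₃) + (F u₁ u₂ u₃ - F w₁ w₂ w₃)‖ := by
        simp only [map_sub]
        congr 1
        abel
    _ ≤ ‖A₀‖ * ‖u₁ - w₁‖ + ‖A₁‖ * ‖u₂ - w₂‖ + ‖A₂‖ * ‖u₃ - w₃‖ +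
          k * (‖u₁ - w₁‖ + ‖u₂ - w₂‖ + ‖u₃ - w₃‖) :=
        norm_add_le_of_le (norm_add_le_of_le (norm_add_le_of_le (A₀.le_opNorm _)
          (A₁.le_opNorm _)) (A₂.le_opNorm _))
          (hF _ _ _ _ _ _)
    _ = (‖A₀‖ + k) * ‖u₁ - w₁‖ + (‖A₁‖ + k) * ‖u₂ - w₂‖ + (‖A₂‖ + k) * ‖u₃ - w₃‖ := by ring
    _ ≤ a₀ * ‖u₁ - w₁‖ + a₁ * ‖u₂ - w₂‖ + a₂ * ‖u₃ - w₃‖ := by gcongr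

theorem norm_delayField_sub_le_mul_weight (hg : 0 ≤ g) (hτ : ∀ s ∈ Icc t₀ T, τ s ∈ Icc 0 g)
    (hf : ∀ s u₁ u₂ u₃ w₁ w₂ w₃,
      ‖f s u₁ u₂ u₃ - f s w₁ w₂ w₃‖ ≤ κ s * (‖u₁ - w₁‖ + ‖u₂ - w₂‖ + ‖u₃ - w₃‖))
    (h₀ : ∀ s ∈ Icc t₀ T, ‖A₀‖ + κ s ≤ a₀) (h₁ : ∀ s ∈ Icc t₀ T, ‖A₁‖ + κ s ≤ a₁)
    (ha₀ : 0 ≤ a₀) (ha₁ : 0 ≤ a₁) {h : ℝ → ℝ} (hh : Monotone h) {c : ℝ} (hc : 0 ≤ c)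
    (hy : ∀ t ∈ Icc (t₀ - g) T, ‖y₁ t - y₂ t‖ ≤ c * h t) (hs : s ∈ Icc t₀ T) :
    ‖delayField A₀ A₁ A₂ f d τ y₁ s - delayField A₀ A₁ A₂ f d τ y₂ s‖ ≤
      (a₀ + a₁) * c * h s := by
  have hnow := hy s (Icc_subset_Icc_left (sub_le_self t₀ hg) hs)
  have hdelayed : ‖y₁ (s - τ s) - y₂ (s - τ s)‖ ≤ c * h s :=
    (hy _ (sub_delay_mem_Icc hτ hs)).trans (by gcongr; exact hh (sub_le_self s (hτ s hs).1))
  calc _ ≤ a₀ * ‖y₁ s - y₂ s‖ + a₁ * ‖y₁ (s - τ s) - y₂ (s - τ s)‖ +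
        (‖A₂‖ + κ s) * ‖d s - d s‖ :=
      norm_linear_add_sub_le (hf s) (h₀ s hs) (h₁ s hs) le_rfl _ _ _ _ _ _
    _ ≤ a₀ * (c * h s) + a₁ * (c * h s) + 0 := by
      gcongr
      simp
    _ = (a₀ + a₁) * c * h s := by ring

theorem norm_delayField_le {N ρ : ℝ} (hg : 0 ≤ g) (hτ : ∀ s ∈ Icc t₀ T, τ s ∈ Icc 0 g)
    (hf : ∀ s u₁ u₂ u₃ w₁ w₂ w₃,
      ‖f s u₁ u₂ u₃ - f s w₁ w₂ w₃‖ ≤ κ s * (‖u₁ - w₁‖ + ‖u₂ - w₂‖ + ‖u₃ - w₃‖))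
    (hf0 : ∀ s, f s 0 0 0 = 0) (hd : ∀ s, ‖d s‖ ≤ ρ)
    (h₀ : ∀ s ∈ Icc t₀ T, ‖A₀‖ + κ s ≤ a₀) (h₁ : ∀ s ∈ Icc t₀ T, ‖A₁‖ + κ s ≤ a₁)
    (h₂ : ∀ s ∈ Icc t₀ T, ‖A₂‖ + κ s ≤ a₂)
    (ha₀ : 0 ≤ a₀) (ha₁ : 0 ≤ a₁) (ha₂ : 0 ≤ a₂)
    (hy : ∀ t ∈ Icc (t₀ - g) T, ‖y t‖ ≤ N) (hs : s ∈ Icc t₀ T) :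
    ‖delayField A₀ A₁ A₂ f d τ y s‖ ≤ (a₀ + a₁) * N + a₂ * ρ := by
  have hnow := hy s (Icc_subset_Icc_left (sub_le_self t₀ hg) hs)
  have hdelayed := hy _ (sub_delay_mem_Icc hτ hs)
  have hzero := norm_linear_add_sub_le (hf s) (h₀ s hs) (h₁ s hs) (h₂ s hs)
    (y s) (y (s - τ s)) 0 0 (d s) 0
  simp only [map_zero, hf0, add_zero, sub_zero] at hzero
  calc ‖delayField A₀ A₁ A₂ f d τ y s‖
      ≤ a₀ * ‖y s‖ + a₁ * ‖y (s - τ s)‖ + a₂ * ‖d s‖ := hzero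
    _ ≤ a₀ * N + a₁ * N + a₂ * ρ := by
      gcongr
      exact hd s
    _ = (a₀ + a₁) * N + a₂ * ρ := by ring

end DelayField

theorem exists_unique_solution_general {D E : Type*} [NormedAddCommGroup D] [NormedSpace ℝ D]
    [NormedAddCommGroup E] [NormedSpace ℝ E] [CompleteSpace E] {β t₀ T g η : ℝ}
    (hβ : 0 < β) (hT : t₀ ≤ T) (hg : 0 ≤ g) (hη : 0 < η)
    {τ : ℝ → ℝ} (hτ_cont : ContinuousOn τ (Icc t₀ T)) (hτ : ∀ t ∈ Icc t₀ T, τ t ∈ Icc 0 g)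
    {A₀ A₁ : E →L[ℝ] E} {A₂ : D →L[ℝ] E} {κ : ℝ → ℝ} (hκ : ∀ s, 0 ≤ κ s)
    {f : ℝ → E → E → D → E}
    (hf_cont : Continuous fun q : ℝ × E × E × D => f q.1 q.2.1 q.2.2.1 q.2.2.2)
    (hf_lip : ∀ s u₁ u₂ u₃ w₁ w₂ w₃,
      ‖f s u₁ u₂ u₃ - f s w₁ w₂ w₃‖ ≤ κ s * (‖u₁ - w₁‖ + ‖u₂ - w₂‖ + ‖u₃ - w₃‖))
    (hf_zero : ∀ s, f s 0 0 0 = 0)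
    {ρ : ℝ} {d : ℝ → D} (hd_cont : Continuous d) (hd : ∀ t, ‖d t‖ ≤ ρ)
    {ν : ℝ → E} (hν : ContinuousOn ν (Icc (t₀ - g) t₀)) {a₀ a₁ a₂ : ℝ}
    (h₀ : ∀ s ∈ Icc t₀ T, ‖A₀‖ + κ s ≤ a₀) (h₁ : ∀ s ∈ Icc t₀ T, ‖A₁‖ + κ s ≤ a₁)
    (h₂ : ∀ s ∈ Icc t₀ T, ‖A₂‖ + κ s ≤ a₂) :
    ∃ x : ℝ → E,
      (ContinuousOn x (Icc (t₀ - g) T) ∧ (∀ s ∈ Icc (t₀ - g) t₀, x s = ν s) ∧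
        ∀ t ∈ Icc t₀ T, x t = ν t₀ + riemannLiouville β t₀ (delayField A₀ A₁ A₂ f d τ x) t) ∧
      weightedEDist (Icc (t₀ - g) T) (weight β t₀ (a₀ + a₁ + η)) x
          (fun t => if t ≤ t₀ then ν t else ν t₀) ≤
        ENNReal.ofReal ((a₀ + a₁ + η) / η * (sSup ((fun s =>
          (s - t₀) ^ β / mittagLeffler β ((a₀ + a₁ + η) * (s - t₀) ^ β)) '' Icc t₀ T) *
            ((a₀ + a₁) * sSup ((fun s => ‖ν s‖) '' Icc (t₀ - g) t₀) + a₂ * ρ) /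
              Real.Gamma (β + 1))) ∧
      ∀ x' : ℝ → E, ContinuousOn x' (Icc (t₀ - g) T) → (∀ s ∈ Icc (t₀ - g) t₀, x' s = ν s) →
        (∀ t ∈ Icc t₀ T,
          x' t = ν t₀ + riemannLiouville β t₀ (delayField A₀ A₁ A₂ f d τ x') t) →
        ∀ t ∈ Icc (t₀ - g) T, x' t = x t := by
  have ht₀ : t₀ ∈ Icc t₀ T := left_mem_Icc.2 hT
  have ha : t₀ - g ≤ t₀ := sub_le_self t₀ hg
  have ha₀ : 0 ≤ a₀ := (add_nonneg (norm_nonneg _) (hκ t₀)).trans (h₀ t₀ ht₀)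
  have ha₁ : 0 ≤ a₁ := (add_nonneg (norm_nonneg _) (hκ t₀)).trans (h₁ t₀ ht₀)
  have ha₂ : 0 ≤ a₂ := (add_nonneg (norm_nonneg _) (hκ t₀)).trans (h₂ t₀ ht₀)
  have hν_le (t) (ht : t ∈ Icc (t₀ - g) T) :
      ‖ν (min t t₀)‖ ≤ sSup ((fun s => ‖ν s‖) '' Icc (t₀ - g) t₀) :=
    le_csSup (isCompact_Icc.bddAbove_image hν.norm) (mem_image_of_mem _ (min_mem_Icc ha ht.1))
  have hmono : Monotone (weight β t₀ (a₀ + a₁ + η)) := monotone_weight hβ t₀ (by positivity)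
  obtain ⟨x, ⟨hx_cont, hx⟩, hx_dist, hx_unique⟩ :=
    exists_unique_eqOn_fracVolterra (θ := a₀ + a₁ + η) (R := delayField A₀ A₁ A₂ f d τ) hβ ha hT
      (add_nonneg ha₀ ha₁) (lt_add_of_pos_right _ hη) hν
      (fun y hy => continuousOn_delayField hg hτ_cont hτ hf_cont hd_cont hy)
      (fun y₁ y₂ c hc hy s hs => norm_delayField_sub_le_mul_weight hg hτ hf_lip h₀ h₁ ha₀ ha₁
        hmono hc hy hs)
      (fun s hs => norm_delayField_le hg hτ hf_lip hf_zero hd h₀ h₁ h₂ ha₀ ha₁ ha₂ hν_le hs)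
  have hy₀ (t) : ν (min t t₀) = if t ≤ t₀ then ν t else ν t₀ := by rw [min_def, apply_ite ν]
  simp only [hy₀, add_sub_cancel_left] at hx_dist
  exact ⟨x, ⟨hx_cont, (eqOn_fracVolterra_iff ha hT).1 hx⟩, hx_dist, fun x' hx'_cont hx'_ν hx'_eq =>
    hx_unique x' hx'_cont ((eqOn_fracVolterra_iff ha hT).2 ⟨hx'_ν, hx'_eq⟩)⟩

/-- Under the standing assumptions on the fractional delayed system, for every `η > 0`
there exists exactly one continuous `x : [t₀ − g, T] → ℝⁿ` with `x = ν` on `[t₀ − g, t₀]`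
satisfying the Volterra integral equation on `[t₀, T]`; moreover this solution satisfies
`ϖ(x, y₀) ≤ ((a₀+a₁+η)/η) · M [(a₀+a₁)‖ν‖ + a₂ρ] / Γ(β+1)` where `y₀ = ν` on
`[t₀ − g, t₀]` and `y₀ ≡ ν(t₀)` on `[t₀, T]`. -/
theorem exists_unique_solution {n p : ℕ} (β t₀ T g η : ℝ)
    (hβ0 : 0 < β) (hβ1 : β < 1) (hT : t₀ < T) (hg : 0 ≤ g) (hη : 0 < η)
    (gdel : ℝ → ℝ) (hgdel_cont : ContinuousOn gdel (Icc t₀ T))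
    (hgdel_mem : ∀ t ∈ Icc t₀ T, gdel t ∈ Icc 0 g)
    (A₀ A₁ : Euc n →L[ℝ] Euc n) (A₂ : Euc p →L[ℝ] Euc n)
    (κ : ℝ → ℝ) (hκ_cont : Continuous κ) (hκ_nonneg : ∀ s, 0 ≤ κ s)
    (f : ℝ → Euc n → Euc n → Euc p → Euc n)
    (hf_cont : Continuous fun q : ℝ × Euc n × Euc n × Euc p => f q.1 q.2.1 q.2.2.1 q.2.2.2)
    (hf_lip : ∀ (s : ℝ) (u₁ u₂ : Euc n) (u₃ : Euc p) (w₁ w₂ : Euc n) (w₃ : Euc p),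
      ‖f s u₁ u₂ u₃ - f s w₁ w₂ w₃‖ ≤ κ s * (‖u₁ - w₁‖ + ‖u₂ - w₂‖ + ‖u₃ - w₃‖))
    (hf_zero : ∀ s : ℝ, f s 0 0 0 = 0)
    (ρ : ℝ) (hρ : 0 < ρ) (d : ℝ → Euc p) (hd_cont : Continuous d) (hd : ∀ t, ‖d t‖ ≤ ρ)
    (ν : ℝ → Euc n) (hν : ContinuousOn ν (Icc (t₀ - g) t₀))
    (a₀ a₁ a₂ : ℝ)
    (ha₀ : IsGreatest ((fun s => ‖A₀‖ + κ s) '' Icc t₀ T) a₀)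
    (ha₁ : IsGreatest ((fun s => ‖A₁‖ + κ s) '' Icc t₀ T) a₁)
    (ha₂ : IsGreatest ((fun s => ‖A₂‖ + κ s) '' Icc t₀ T) a₂)
    (M : ℝ) (hM : M = sSup ((fun s : ℝ =>
      (s - t₀) ^ β / mittagLeffler β ((a₀ + a₁ + η) * (s - t₀) ^ β)) '' Icc t₀ T))
    (νnorm : ℝ) (hνnorm : νnorm = sSup ((fun s => ‖ν s‖) '' Icc (t₀ - g) t₀)) :
    ∃ x : ℝ → Euc n,
      (ContinuousOn x (Icc (t₀ - g) T) ∧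
        (∀ s ∈ Icc (t₀ - g) t₀, x s = ν s) ∧
        (∀ t ∈ Icc t₀ T, x t = ν t₀ + (Real.Gamma β)⁻¹ •
          ∫ s in t₀..t, ((t - s) ^ (β - 1)) •
            (A₀ (x s) + A₁ (x (s - gdel s)) + A₂ (d s)
              + f s (x s) (x (s - gdel s)) (d s)))) ∧
      genDist β t₀ T g (a₀ + a₁ + η) x (fun t => if t ≤ t₀ then ν t else ν t₀) ≤
        ENNReal.ofReal ((a₀ + a₁ + η) / η * (M * ((a₀ + a₁) * νnorm + a₂ * ρ)
          / Real.Gamma (β + 1))) ∧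
      (∀ x' : ℝ → Euc n,
        ContinuousOn x' (Icc (t₀ - g) T) →
        (∀ s ∈ Icc (t₀ - g) t₀, x' s = ν s) →
        (∀ t ∈ Icc t₀ T, x' t = ν t₀ + (Real.Gamma β)⁻¹ •
          ∫ s in t₀..t, ((t - s) ^ (β - 1)) •
            (A₀ (x' s) + A₁ (x' (s - gdel s)) + A₂ (d s)
              + f s (x' s) (x' (s - gdel s)) (d s))) →
        ∀ t ∈ Icc (t₀ - g) T, x' t = x t) := by
  subst hM hνnorm
  exact exists_unique_solution_general hβ0 hT.le hg hη hgdel_cont hgdel_mem hκ_nonneg hf_cont hf_lip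
    hf_zero hd_cont hd hν (fun _ hs => ha₀.2 (mem_image_of_mem _ hs))
    (fun _ hs => ha₁.2 (mem_image_of_mem _ hs)) (fun _ hs => ha₂.2 (mem_image_of_mem _ hs))
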